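/- arXiv:2410.08909 — 2 statements merged into one kernel-verified Lean document; each statement's English description precedes it below -/
import Mathlib

section
/- (Theorem 1, optimality of IxG*, invariant form.) Let (V, E, w) be a finite weighted directed graph with nonnegative weights, let s, t be vertices such that some walk from s to t exists, and let h : V → ℝ be admissible for target t. Let g : V → ℝ be such that (i) g(t) equals the cost of some walk from s to t, and (ii) for every walk W from s to t there exists an occurrence of a vertex v on W such that g(v) is at most the cost of the prefix of W up to v and g(t) ≤ g(v) + h(v). Then g(t) equals d(s,t), the infimum of the costs of walks from s to t. -/
/-- A walk from `s` to `t` in the directed graph with adjacency `E`: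
a nonempty list of vertices starting at `s`, ending at `t`, with
consecutive vertices adjacent. -/
def IsWalk {V : Type*} (E : V → V → Prop) (s t : V) (l : List V) : Prop :=
  l ≠ [] ∧ l.head? = some s ∧ l.getLast? = some t ∧ l.Chain' E

/-- Cost of a walk: the sum of the weights of its consecutive pairs. -/
def walkCost {V : Type*} (w : V → V → ℝ) (l : List V) : ℝ :=
  ((l.zip l.tail).map fun p => w p.1 p.2).sum

theorem walkCost_split {V : Type*} (w : V → V → ℝ) (l₁ : List V) (v : V) (l₂ : List V) :
    walkCost w (l₁ ++ v :: l₂) = walkCost w (l₁ ++ [v]) + walkCost w (v :: l₂) := by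
  induction l₁ with
  | nil => simp [walkCost]
  | cons a l ih =>
    cases l with
    | nil => simp [walkCost]
    | cons b l =>
      simp only [walkCost, List.cons_append, List.tail_cons, List.zip_cons_cons,
        List.map_cons, List.sum_cons] at ih ⊢
      rw [ih, add_assoc]

/-- Theorem 1, optimality of IxG*, invariant form. -/
theorem ixg_star_optimal
    {V : Type*} [Fintype V] (E : V → V → Prop) (w : V → V → ℝ)
    (hw : ∀ a b, E a b → 0 ≤ w a b) (s t : V)
    (hex : ∃ l, IsWalk E s t l)
    (h : V → ℝ) (hadm : ∀ v l, IsWalk E v t l → h v ≤ walkCost w l)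
    (g : V → ℝ)
    (hgoal : ∃ l, IsWalk E s t l ∧ g t = walkCost w l)
    (hinv : ∀ l, IsWalk E s t l → ∃ l₁ v l₂, l = l₁ ++ v :: l₂ ∧
      g v ≤ walkCost w (l₁ ++ [v]) ∧ g t ≤ g v + h v) :
    g t = sInf {c | ∃ l, IsWalk E s t l ∧ walkCost w l = c} := by
  have key : ∀ l, IsWalk E s t l → g t ≤ walkCost w l := by
    intro l hl
    obtain ⟨l₁, v, l₂, rfl, h1, h2⟩ := hinv l hl
    have hs : IsWalk E v t (v :: l₂) := by
      refine ⟨by simp, by simp, ?_, ?_⟩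
      · have := hl.2.2.1
        rwa [List.getLast?_append_of_ne_nil _ (by simp)] at this
      · exact hl.2.2.2.right_of_append
    have := hadm v _ hs
    rw [walkCost_split]
    linarith
  obtain ⟨l, hl, hg⟩ := hgoal
  have hleast : IsLeast {c | ∃ l, IsWalk E s t l ∧ walkCost w l = c} (g t) := by
    refine ⟨⟨l, hl, hg.symm⟩, ?_⟩
    rintro c ⟨l', hl', rfl⟩
    exact key l' hl'
  exact hleast.csInf_eq.symm
end

section
/- (Theorem 2, bounded suboptimality of IxG*, invariant form.) Let (V, E, w) be a finite weighted directed graph with nonnegative weights, let s, t be vertices such that some walk from s to t exists, let ε ≥ 1 be a real number, and let h : V → ℝ be admissible for target t with h(v) ≥ 0 for all v. Let g : V → ℝ be such that for every walk W from s to t there exists an occurrence of a vertex v on W such that g(v) is at most the cost of the prefix of W up to v and g(t) ≤ g(v) + ε·h(v). Then g(t) ≤ ε·d(s,t), where d(s,t) is the infimum of the costs of walks from s to t. -/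
theorem walkCost_cons_cons' {V : Type*} (w : V → V → ℝ) (a b : V) (l : List V) :
    walkCost w (a :: b :: l) = w a b + walkCost w (b :: l) := by
  simp [walkCost]

theorem walkCost_nonneg' {V : Type*} (E : V → V → Prop) (w : V → V → ℝ)
    (hw : ∀ a b, E a b → 0 ≤ w a b) (l : List V) (hl : l.IsChain E) : 0 ≤ walkCost w l := by
  induction l with
  | nil => simp [walkCost]
  | cons a l ih =>
    cases l with
    | nil => simp [walkCost]
    | cons b l =>
      rw [walkCost_cons_cons']
      rw [List.isChain_cons_cons] at hl
      exact add_nonneg (hw _ _ hl.1) (ih hl.2)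

/-- Theorem 2, bounded suboptimality of IxG*, invariant form. -/
theorem ixg_star_bounded_suboptimal
    {V : Type*} [Fintype V] (E : V → V → Prop) (w : V → V → ℝ)
    (hw : ∀ a b, E a b → 0 ≤ w a b) (s t : V)
    (hex : ∃ l, IsWalk E s t l)
    (ε : ℝ) (hε : 1 ≤ ε)
    (h : V → ℝ) (hadm : ∀ v l, IsWalk E v t l → h v ≤ walkCost w l)
    (hh0 : ∀ v, 0 ≤ h v)
    (g : V → ℝ)
    (hinv : ∀ l, IsWalk E s t l → ∃ l₁ v l₂, l = l₁ ++ v :: l₂ ∧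
      g v ≤ walkCost w (l₁ ++ [v]) ∧ g t ≤ g v + ε * h v) :
    g t ≤ ε * sInf {c | ∃ l, IsWalk E s t l ∧ walkCost w l = c} := by
  have hε0 : 0 < ε := by linarith
  have key : ∀ l, IsWalk E s t l → g t ≤ ε * walkCost w l := by
    intro l hl
    obtain ⟨l₁, v, l₂, rfl, h1, h2⟩ := hinv l hl
    obtain ⟨-, -, hlast, hch⟩ := hl
    have hch' : (l₁ ++ v :: l₂).IsChain E := hch
    have hsuf : (v :: l₂).IsChain E := (List.isChain_append.1 hch').2.1
    have hpre : (l₁ ++ [v]).IsChain E := by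
      have : l₁ ++ v :: l₂ = (l₁ ++ [v]) ++ l₂ := by simp
      rw [this] at hch'
      exact (List.isChain_append.1 hch').1
    have h3 : h v ≤ walkCost w (v :: l₂) := by
      apply hadm
      refine ⟨by simp, by simp, ?_, hsuf⟩
      rw [List.getLast?_append_of_ne_nil _ (by simp)] at hlast
      exact hlast
    have h4 := walkCost_nonneg' E w hw _ hpre
    rw [walkCost_split]
    nlinarith [mul_le_mul_of_nonneg_left h3 hε0.le,
      mul_nonneg (sub_nonneg.2 hε) h4]
  rw [← div_le_iff₀' hε0]
  apply le_csInf
  · obtain ⟨l, hl⟩ := hex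
    exact ⟨_, l, hl, rfl⟩
  · rintro c ⟨l, hl, rfl⟩
    rw [div_le_iff₀' hε0]
    exact key l hl
end
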